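/- Let φ: ℕ → ℝ⁺ be non-decreasing with φ(n) → ∞. If Σ_{n≥1} n/(φ(n)² (log φ(n))²) = ∞, then the set E'(φ) = {x ∈ [0,1) : there exist 1 ≤ k ≠ l ≤ n with a'_k(x) ≥ φ(n) and a'_l(x) ≥ φ(n) for infinitely many n} has full Lebesgue measure 1. -/

import Mathlib

open Filter MeasureTheory Set

/-- The Gauss map `T(x) = {1/x}` (with `T(0) = 0`). -/
noncomputable def gaussMap (x : ℝ) : ℝ := Int.fract x⁻¹

/-- `cfA x n` is the `n`-th partial quotient `aₙ(x)` of the continued fraction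
expansion of `x` (for `n ≥ 1`): `aₙ(x) = ⌊1 / T^{n-1}(x)⌋`. -/
noncomputable def cfA (x : ℝ) (n : ℕ) : ℕ := ⌊(gaussMap^[n - 1] x)⁻¹⌋₊

/-- `cfA' x n = aₙ'(x)`: equal to `aₙ(x)` if `aₙ(x)` is prime, and `0` otherwise. -/
noncomputable def cfA' (x : ℝ) (n : ℕ) : ℕ := if (cfA x n).Prime then cfA x n else 0

/-- The set `E'(φ)` of `x ∈ [0,1)` having, for infinitely many `n`, two distinct indices
`1 ≤ k ≠ l ≤ n` with prime partial quotients `aₖ'(x), aₗ'(x) ≥ φ(n)`. -/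
noncomputable def Eset (φ : ℕ → ℝ) : Set ℝ :=
  {x | x ∈ Set.Ico (0 : ℝ) 1 ∧
    {n : ℕ | ∃ k l : ℕ, 1 ≤ k ∧ k ≤ n ∧ 1 ≤ l ∧ l ≤ n ∧ k ≠ l ∧
      φ n ≤ (cfA' x k : ℝ) ∧ φ n ≤ (cfA' x l : ℝ)}.Infinite}

open scoped Topology

/-!
Conditionally on the first `m` partial quotients, the law of `T^m(x)`, for `T` the Gauss map,
belongs to a one-parameter family (`tailLaw`). A lower bound for the probability of an event
that is uniform over this family therefore holds conditionally on the past, which replaces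
independence in the second Borel–Cantelli lemma.

Each law of the family gives mass at least `1/(3k²)` to the points with first partial quotient `k`,
so by Chebyshev's estimates a prime partial quotient `≥ t` occurs with conditional probability at
least of order `q = 1/(t log t)`. Among `2^(j+1)` consecutive partial quotients, two such primes
occur with probability at least of order `(2^j q)²` when this is small. With `t = φ(2^(j+2))` the
sum over `j` of these probabilities diverges by Cauchy condensation.
-/

/-! ### Series and products -/

theorem summable_natCast_mul_iff_summable_four_pow_mul {f : ℕ → ℝ} (hf0 : ∀ n, 0 ≤ f n)
    (hf : Antitone f) :
    (Summable fun n : ℕ ↦ (n : ℝ) * f n) ↔ Summable fun j : ℕ ↦ (4 : ℝ) ^ j * f (2 ^ j) := by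
  -- Both series are condensations of `∑ f(√m)`: along the squares and along the powers of `4`.
  have hsqrt_anti : ∀ ⦃m n : ℕ⦄, 0 < m → m ≤ n → f n.sqrt ≤ f m.sqrt :=
    fun _ _ _ hmn ↦ hf (Nat.sqrt_le_sqrt hmn)
  have hsquares : (Summable fun k : ℕ ↦ (2 * k + 3 : ℝ) * f (k + 1)) ↔
      Summable fun m : ℕ ↦ f m.sqrt := by
    rw [← summable_schlomilch_iff_of_nonneg (C := 3) (u := fun k ↦ (k + 1) ^ 2)
      (fun m ↦ hf0 m.sqrt) hsqrt_anti (fun k ↦ by positivity)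
      (fun a b hab ↦ by dsimp only; gcongr) three_ne_zero (fun k ↦ by grind)]
    refine summable_congr fun k ↦ ?_
    rw [Nat.sqrt_eq']
    push_cast
    ring
  have hpowers : (Summable fun j : ℕ ↦ (4 : ℝ) ^ j * f (2 ^ j)) ↔
      Summable fun m : ℕ ↦ f m.sqrt := by
    rw [← summable_schlomilch_iff_of_nonneg (C := 4) (u := fun j ↦ 4 ^ j)
      (fun m ↦ hf0 m.sqrt) hsqrt_anti (fun k ↦ by positivity)
      (pow_right_strictMono₀ (by norm_num)) four_ne_zero (fun k ↦ by grind),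
      ← summable_mul_left_iff (three_ne_zero : (3 : ℝ) ≠ 0)]
    refine summable_congr fun j ↦ ?_
    have hroot : Nat.sqrt (4 ^ j) = 2 ^ j := by
      rw [show (4 : ℕ) = 2 ^ 2 by rfl, pow_right_comm, Nat.sqrt_eq']
    rw [hroot]
    push_cast
    ring
  rw [hpowers, ← hsquares, ← summable_nat_add_iff 1]
  refine ⟨fun h ↦ (h.mul_left 3).of_nonneg_of_le (fun k ↦ ?_) (fun k ↦ ?_),
    fun h ↦ h.of_nonneg_of_le (fun k ↦ ?_) (fun k ↦ ?_)⟩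
  · exact mul_nonneg (by positivity) (hf0 _)
  · rw [← mul_assoc]
    refine mul_le_mul_of_nonneg_right ?_ (hf0 _)
    push_cast
    linarith [k.cast_nonneg (α := ℝ)]
  · exact mul_nonneg (by positivity) (hf0 _)
  · refine mul_le_mul_of_nonneg_right ?_ (hf0 _)
    push_cast
    linarith [k.cast_nonneg (α := ℝ)]

theorem one_sub_pow_mul_one_add_mul_le_one {q : ℝ} (hq0 : 0 ≤ q) (hq1 : q ≤ 1) (M : ℕ) :
    (1 - q) ^ M * (1 + M * q) ≤ 1 :=
  calc (1 - q) ^ M * (1 + M * q) ≤ (1 - q) ^ M * (1 + q) ^ M := by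
        have := one_add_mul_le_pow (a := q) (by linarith) M
        have : 0 ≤ 1 - q := by linarith
        gcongr
    _ = (1 - q ^ 2) ^ M := by rw [← mul_pow]; ring_nf
    _ ≤ 1 := pow_le_one₀ (by nlinarith) (by nlinarith)

theorem summable_sq_mul_of_summable_sq_one_sub_one_sub_pow {q : ℕ → ℝ} (hq0 : ∀ j, 0 ≤ q j)
    (hq1 : ∀ j, q j ≤ 1) {M : ℕ → ℕ} (h : Summable fun j ↦ (1 - (1 - q j) ^ M j) ^ 2) :
    Summable fun j ↦ (M j * q j) ^ 2 := by
  have hsmall : ∀ᶠ j in atTop, (1 - (1 - q j) ^ M j) ^ 2 < (1 / 2) ^ 2 :=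
    h.tendsto_atTop_zero.eventually_lt_const (by norm_num)
  refine (h.mul_left 4).of_norm_bounded_eventually_nat ?_
  filter_upwards [hsmall] with j hj
  have hhalf : 1 / 2 < (1 - q j) ^ M j := by linarith [lt_of_pow_lt_pow_left₀ 2 (by norm_num) hj]
  have hMq : 0 ≤ M j * q j := mul_nonneg (Nat.cast_nonneg _) (hq0 j)
  have hle : M j * q j ≤ 2 * (1 - (1 - q j) ^ M j) := by
    nlinarith [one_sub_pow_mul_one_add_mul_le_one (hq0 j) (hq1 j) (M j)]
  rw [Real.norm_of_nonneg (by positivity)]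
  calc (M j * q j) ^ 2 ≤ (2 * (1 - (1 - q j) ^ M j)) ^ 2 := by gcongr
    _ = 4 * (1 - (1 - q j) ^ M j) ^ 2 := by ring

theorem tendsto_prod_one_sub_of_not_summable {r : ℕ → ℝ} (hr0 : ∀ i, 0 ≤ r i)
    (hr1 : ∀ i, r i ≤ 1) (hr : ¬ Summable r) :
    Tendsto (fun J ↦ ∏ i ∈ Finset.range J, (1 - r i)) atTop (𝓝 0) := by
  have hexp : Tendsto (fun J ↦ Real.exp (-∑ i ∈ Finset.range J, r i)) atTop (𝓝 0) :=
    Real.tendsto_exp_neg_atTop_nhds_zero.comp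
      ((not_summable_iff_tendsto_nat_atTop_of_nonneg hr0).1 hr)
  refine squeeze_zero (fun J ↦ Finset.prod_nonneg fun i _ ↦ sub_nonneg.2 (hr1 i)) (fun J ↦ ?_) hexp
  rw [← Finset.sum_neg_distrib, Real.exp_sum]
  exact Finset.prod_le_prod (fun i _ ↦ sub_nonneg.2 (hr1 i))
    fun i _ ↦ Real.one_sub_le_exp_neg (r i)

/-! ### Primes between `x` and `4x` -/

open Asymptotics in
theorem isLittleO_sqrt_mul_log_id : (fun x : ℝ ↦ √x * Real.log x) =o[atTop] (id : ℝ → ℝ) := by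
  have hlog : Real.log =o[atTop] fun x : ℝ ↦ √x := by
    simpa only [Real.sqrt_eq_rpow] using isLittleO_log_rpow_atTop one_half_pos
  refine ((isBigO_refl (fun x : ℝ ↦ √x) atTop).mul_isLittleO hlog).congr' .rfl ?_
  filter_upwards [eventually_ge_atTop 0] with x hx using Real.mul_self_sqrt hx

open Asymptotics in
theorem isLittleO_log_add_const_id (a : ℝ) :
    (fun x : ℝ ↦ Real.log (x + a)) =o[atTop] (id : ℝ → ℝ) :=
  (Real.isLittleO_log_id_atTop.comp_tendsto
    (tendsto_atTop_add_const_right _ a tendsto_id)).trans_isBigO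
    ((isBigO_refl id atTop).add (isLittleO_const_id_atTop a).isBigO)

open Asymptotics in
theorem eventually_mul_le_chebyshev_theta {c : ℝ} (hc : c < Real.log 2) :
    ∀ᶠ x in atTop, c * x ≤ Chebyshev.theta x := by
  have herror := ((isLittleO_log_add_const_id 2).add
    (isLittleO_sqrt_mul_log_id.const_mul_left 2)).add (isLittleO_const_id_atTop (Real.log 2))
  filter_upwards [herror.bound (sub_pos.2 hc), eventually_ge_atTop 1] with x hx hx1
  rw [id, Real.norm_of_nonneg (by linarith : 0 ≤ x)] at hx
  linarith [Chebyshev.theta_ge' hx1, (Real.le_norm_self _).trans hx]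

theorem eventually_log_two_mul_le_chebyshev_theta_sub :
    ∀ᶠ x in atTop, Real.log 2 * x ≤ Chebyshev.theta (4 * x) - Chebyshev.theta x := by
  have hlog2 := Real.log_pos one_lt_two
  have h4 : Tendsto (fun x : ℝ ↦ 4 * x) atTop atTop := tendsto_id.const_mul_atTop (by norm_num)
  filter_upwards [h4.eventually (eventually_mul_le_chebyshev_theta
    (show 3 / 4 * Real.log 2 < Real.log 2 by linarith)), eventually_ge_atTop 0] with x hx hx0
  have hupper := Chebyshev.theta_le_log4_mul_x hx0
  rw [show (4 : ℝ) = 2 ^ 2 by norm_num, Real.log_pow] at hupper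
  push_cast at hupper
  linarith

theorem eventually_le_card_primes_Ioc :
    ∀ᶠ x : ℝ in atTop,
      x / (4 * Real.log x) ≤ ((Finset.Ioc ⌊x⌋₊ ⌊4 * x⌋₊).filter Nat.Prime).card := by
  filter_upwards [eventually_log_two_mul_le_chebyshev_theta_sub, eventually_ge_atTop 4]
    with x hgap hx
  set s := (Finset.Ioc ⌊x⌋₊ ⌊4 * x⌋₊).filter Nat.Prime with hs
  have hlog : 0 < Real.log x := Real.log_pos (by linarith)
  have hsum : Chebyshev.theta (4 * x) - Chebyshev.theta x = ∑ p ∈ s, Real.log p := by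
    simp only [Chebyshev.theta, hs, Finset.sum_filter]
    rw [sub_eq_iff_eq_add', Finset.sum_Ioc_consecutive _ (Nat.zero_le _)
      (Nat.floor_le_floor (by linarith))]
  have hterm : ∀ p ∈ s, Real.log p ≤ 2 * Real.log x := by
    intro p hp
    simp only [hs, Finset.mem_filter, Finset.mem_Ioc] at hp
    have hpx : (p : ℝ) ≤ x ^ 2 := ((Nat.le_floor_iff (by linarith)).1 hp.1.2).trans (by nlinarith)
    have hp0 : (0 : ℝ) < p := by exact_mod_cast hp.2.pos
    simpa using Real.log_le_log hp0 hpx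
  have hcard : ∑ p ∈ s, Real.log p ≤ s.card * (2 * Real.log x) := by
    simpa using Finset.sum_le_card_nsmul _ _ _ hterm
  rw [div_le_iff₀ (by positivity)]
  nlinarith [Real.log_two_gt_d9]

/-! ### The Gauss map -/

theorem measurable_gaussMap : Measurable gaussMap := measurable_fract.comp measurable_inv

theorem measurable_cfA (n : ℕ) : Measurable fun x ↦ cfA x n :=
  Nat.measurable_floor.comp (measurable_gaussMap.iterate _).inv

theorem cfA_gaussMap_iterate (x : ℝ) (m k : ℕ) :
    cfA (gaussMap^[m] x) (k + 1) = cfA x (m + k + 1) := by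
  simp only [cfA, ← Function.iterate_add_apply, Nat.add_sub_cancel, add_comm]

theorem cfA'_gaussMap_iterate (x : ℝ) (m k : ℕ) :
    cfA' (gaussMap^[m] x) (k + 1) = cfA' x (m + k + 1) := by
  simp only [cfA', cfA_gaussMap_iterate]

/-- The inverse branch `y ↦ 1/(k+y)` of the Gauss map, whose image consists of the points with
first partial quotient `k`. -/
noncomputable def gaussBranch (k : ℕ+) (y : ℝ) : ℝ := ((k : ℝ) + y)⁻¹

theorem measurable_gaussBranch (k : ℕ+) : Measurable (gaussBranch k) :=
  (measurable_id.const_add _).inv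

theorem gaussMap_gaussBranch (k : ℕ+) {y : ℝ} (hy : y ∈ Ico (0 : ℝ) 1) :
    gaussMap (gaussBranch k y) = y := by
  rw [gaussMap, gaussBranch, inv_inv, Int.fract_natCast_add, Int.fract_eq_self.2 hy]

theorem cfA_gaussBranch_one (k : ℕ+) {y : ℝ} (hy : y ∈ Ico (0 : ℝ) 1) :
    cfA (gaussBranch k y) 1 = k := by
  rw [cfA, gaussBranch, Nat.sub_self, Function.iterate_zero_apply, inv_inv,
    add_comm, Nat.floor_add_natCast hy.1, Nat.floor_eq_zero.2 hy.2, zero_add]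

theorem gaussBranch_mem_Icc (k : ℕ+) {y : ℝ} (hy : 0 ≤ y) : gaussBranch k y ∈ Icc (0 : ℝ) 1 := by
  have hk : (1 : ℝ) ≤ k := Nat.one_le_cast.2 k.pos
  exact ⟨by rw [gaussBranch]; positivity, inv_le_one_of_one_le₀ (by linarith)⟩

theorem injOn_gaussBranch (k : ℕ+) : InjOn (gaussBranch k) (Ico 0 1) :=
  (show LeftInvOn gaussMap (gaussBranch k) (Ico 0 1) from fun _ ↦ gaussMap_gaussBranch k).injOn

theorem hasDerivAt_gaussBranch (k : ℕ+) {y : ℝ} (hy : 0 ≤ y) :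
    HasDerivAt (gaussBranch k) (-1 / (k + y) ^ 2) y :=
  ((hasDerivAt_id y).const_add (k : ℝ)).fun_inv (by positivity)

theorem iUnion_image_gaussBranch : ⋃ k, gaussBranch k '' Ico 0 1 = Ioc 0 1 := by
  refine Subset.antisymm (iUnion_subset fun k ↦ ?_) fun x hx ↦ ?_
  · rintro _ ⟨y, hy, rfl⟩
    have := hy.1
    exact ⟨by rw [gaussBranch]; positivity, (gaussBranch_mem_Icc k hy.1).2⟩
  · have hfloor : 0 < ⌊x⁻¹⌋₊ := Nat.floor_pos.2 ((one_le_inv₀ hx.1).2 hx.2)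
    refine mem_iUnion.2 ⟨⟨⌊x⁻¹⌋₊, hfloor⟩, gaussMap x, ⟨Int.fract_nonneg _, Int.fract_lt_one _⟩, ?_⟩
    have hx0 : 0 ≤ x⁻¹ := inv_nonneg.2 hx.1.le
    simp only [gaussBranch, gaussMap, PNat.mk_coe, natCast_floor_eq_intCast_floor hx0,
      Int.floor_add_fract, inv_inv]

theorem pairwise_disjoint_image_gaussBranch :
    Pairwise (Function.onFun Disjoint fun k ↦ gaussBranch k '' Ico 0 1) := by
  refine fun j k hjk ↦ disjoint_left.2 ?_
  rintro _ ⟨y, hy, rfl⟩ ⟨z, hz, hzy⟩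
  apply hjk
  rw [← PNat.coe_inj, ← cfA_gaussBranch_one j hy, ← hzy, cfA_gaussBranch_one k hz]

/-- The law of `T^m(x)`, for `T` the Gauss map and `x` uniform on `[0, 1)`, conditionally on the
first `m` partial quotients of `x`. It depends on these only through `θ = q_{m-1}/q_m`, where
`q_m` is the denominator of the `m`-th convergent. -/
noncomputable def tailLaw (θ : unitInterval) : Measure ℝ :=
  (volume.restrict (Ico 0 1)).withDensity fun y ↦ ENNReal.ofReal ((1 + θ) / (1 + θ * y) ^ 2)

theorem tailLaw_zero : tailLaw 0 = volume.restrict (Ico 0 1) := by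
  simp [tailLaw]

theorem tailLaw_apply (θ : unitInterval) {E : Set ℝ} (hE : MeasurableSet E) :
    tailLaw θ E = ∫⁻ y in E ∩ Ico 0 1, ENNReal.ofReal ((1 + θ) / (1 + θ * y) ^ 2) := by
  rw [tailLaw, withDensity_apply _ hE, Measure.restrict_restrict hE]

theorem hasDerivAt_tailLaw_cdf {θ y : ℝ} (h : 1 + θ * y ≠ 0) :
    HasDerivAt (fun y ↦ (1 + θ) * y / (1 + θ * y)) ((1 + θ) / (1 + θ * y) ^ 2) y := by
  convert! ((hasDerivAt_id y).const_mul (1 + θ)).fun_div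
    (((hasDerivAt_id y).const_mul θ).const_add 1) h using 1
  simp only [id]
  ring

instance isProbabilityMeasure_tailLaw (θ : unitInterval) : IsProbabilityMeasure (tailLaw θ) := by
  have hpos : ∀ y ∈ uIcc (0 : ℝ) 1, 0 < 1 + (θ : ℝ) * y := fun y hy ↦ by
    rw [uIcc_of_le zero_le_one] at hy
    have := θ.2.1
    have := hy.1
    positivity
  have hcont : ContinuousOn (fun y ↦ (1 + θ) / (1 + (θ : ℝ) * y) ^ 2) (uIcc 0 1) :=
    continuousOn_const.div (by fun_prop) fun y hy ↦ (pow_pos (hpos y hy) 2).ne'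
  have hint := hcont.intervalIntegrable (μ := volume)
  have htotal : ∫ y in (0 : ℝ)..1, (1 + θ) / (1 + (θ : ℝ) * y) ^ 2 = 1 := by
    rw [intervalIntegral.integral_eq_sub_of_hasDerivAt
      (fun y hy ↦ hasDerivAt_tailLaw_cdf (hpos y hy).ne') hint]
    have := hpos 1 (by simp)
    rw [mul_one] at this
    field_simp
    simp
  constructor
  rw [tailLaw_apply θ .univ, univ_inter, restrict_Ico_eq_restrict_Ioc,
    ← ofReal_integral_eq_lintegral_ofReal hint.1, ← intervalIntegral.integral_of_le zero_le_one,
    htotal, ENNReal.ofReal_one]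
  refine ae_of_all _ fun y ↦ ?_
  have := θ.2.1
  positivity

/-- The transition `q_{m-1}/q_m ↦ q_m/q_{m+1}` of the parameter of `tailLaw` when the next partial
quotient is `k`, from `q_{m+1} = k q_m + q_{m-1}`. -/
noncomputable def tailParam (k : ℕ+) (θ : unitInterval) : unitInterval :=
  ⟨gaussBranch k θ, gaussBranch_mem_Icc k θ.2.1⟩

theorem tailLaw_apply_eq_tsum (θ : unitInterval) {E : Set ℝ} (hE : MeasurableSet E) :
    tailLaw θ E = ∑' k : ℕ+, ENNReal.ofReal ((1 + θ) / ((k + θ) * (k + θ + 1))) *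
      tailLaw (tailParam k θ) (gaussBranch k ⁻¹' E) := by
  have hmeas : ∀ k, MeasurableSet (gaussBranch k ⁻¹' E ∩ Ico 0 1) := fun k ↦
    (measurable_gaussBranch k hE).inter measurableSet_Ico
  have hinj : ∀ k, InjOn (gaussBranch k) (gaussBranch k ⁻¹' E ∩ Ico 0 1) := fun k ↦
    (injOn_gaussBranch k).mono inter_subset_right
  have hcover : (E ∩ Ico 0 1 : Set ℝ) =ᵐ[volume]
      ⋃ k, gaussBranch k '' (gaussBranch k ⁻¹' E ∩ Ico 0 1) := by
    simp only [image_preimage_inter, ← inter_iUnion, iUnion_image_gaussBranch]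
    exact (ae_eq_refl E).inter Ico_ae_eq_Ioc
  rw [tailLaw_apply θ hE, setLIntegral_congr hcover, lintegral_iUnion
    (fun k ↦ (hmeas k).image_of_measurable_injOn (measurable_gaussBranch k) (hinj k))
    (pairwise_disjoint_image_gaussBranch.mono fun j k h ↦
      h.mono (image_mono inter_subset_right) (image_mono inter_subset_right))]
  refine tsum_congr fun k ↦ ?_
  rw [lintegral_image_eq_lintegral_abs_deriv_mul (hmeas k)
    (fun y hy ↦ (hasDerivAt_gaussBranch k hy.2.1).hasDerivWithinAt) (hinj k),
    tailLaw_apply _ (measurable_gaussBranch k hE),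
    ← lintegral_const_mul' _ _ ENNReal.ofReal_ne_top]
  refine setLIntegral_congr_fun (hmeas k) fun y hy ↦ ?_
  have hy0 : 0 ≤ y := hy.2.1
  have hθ0 : 0 ≤ (θ : ℝ) := θ.2.1
  -- The density of `tailLaw θ` at `1/(k+y)` times the Jacobian `1/(k+y)²` is `(1+θ)/(k+θ+y)²`.
  simp only [tailParam, gaussBranch]
  rw [← ENNReal.ofReal_mul (by positivity), ← ENNReal.ofReal_mul (by positivity), abs_div,
    abs_neg, abs_one, abs_of_pos (by positivity)]
  congr 1
  field_simp
  ring

theorem ae_tailLaw_mem_Ico (θ : unitInterval) : ∀ᵐ x ∂tailLaw θ, x ∈ Ico (0 : ℝ) 1 :=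
  (withDensity_absolutelyContinuous _ _).ae_le (ae_restrict_mem measurableSet_Ico)

theorem tailLaw_congr_of_forall_mem_Ico (θ : unitInterval) {A B : Set ℝ}
    (h : ∀ x ∈ Ico (0 : ℝ) 1, x ∈ A ↔ x ∈ B) : tailLaw θ A = tailLaw θ B :=
  measure_congr ((ae_tailLaw_mem_Ico θ).mono fun x hx ↦ propext (h x hx))

theorem tailLaw_cfA_one_eq (θ : unitInterval) (k : ℕ+) :
    tailLaw θ {x | cfA x 1 = k} = ENNReal.ofReal ((1 + θ) / ((k + θ) * (k + θ + 1))) := by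
  rw [tailLaw_apply_eq_tsum θ (measurableSet_eq_fun (measurable_cfA 1) measurable_const),
    tsum_eq_single k]
  · rw [tailLaw_congr_of_forall_mem_Ico (B := univ), measure_univ, mul_one]
    intro y hy
    simp [cfA_gaussBranch_one k hy]
  · intro j hj
    rw [tailLaw_congr_of_forall_mem_Ico (B := ∅), measure_empty, mul_zero]
    intro y hy
    simp [cfA_gaussBranch_one j hy, hj]

theorem le_tailLaw_real_cfA_one_eq (θ : unitInterval) (k : ℕ+) :
    1 / (3 * (k : ℝ) ^ 2) ≤ (tailLaw θ).real {x | cfA x 1 = k} := by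
  have hθ0 : 0 ≤ (θ : ℝ) := θ.2.1
  have hθ1 : (θ : ℝ) ≤ 1 := θ.2.2
  have hk : (1 : ℝ) ≤ k := Nat.one_le_cast.2 k.pos
  rw [measureReal_def, tailLaw_cfA_one_eq, ENNReal.toReal_ofReal (by positivity),
    div_le_div_iff₀ (by positivity) (by positivity)]
  have hk' := sub_nonneg.2 hk
  nlinarith [mul_nonneg hθ0 hk', mul_nonneg (mul_nonneg hθ0 hθ0) hk',
    mul_nonneg (mul_nonneg hθ0 hk') hk']

/-! ### Quasi-independence of blocks of partial quotients -/

/-- The first `m` partial quotients of `x`, so that the `i`-th coordinate is `cfA x (i + 1)`. -/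
noncomputable def cfDigits (m : ℕ) (x : ℝ) : Fin m → ℕ := fun i ↦ cfA x (i + 1)

/-- The `σ`-algebra generated by the first `m` partial quotients. -/
noncomputable abbrev cfAlgebra (m : ℕ) : MeasurableSpace ℝ :=
  MeasurableSpace.comap (cfDigits m) inferInstance

theorem measurable_cfDigits (m : ℕ) : Measurable (cfDigits m) :=
  measurable_pi_lambda _ fun _ ↦ measurable_cfA _

theorem measurableSet_of_cfAlgebra {m : ℕ} {A : Set ℝ} (hA : MeasurableSet[cfAlgebra m] A) :
    MeasurableSet A :=
  (measurable_cfDigits m).comap_le A hA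

theorem measurable_cfA_cfAlgebra {k m : ℕ} (h : k < m) :
    Measurable[cfAlgebra m] fun x ↦ cfA x (k + 1) :=
  (measurable_pi_apply (⟨k, h⟩ : Fin m)).comp (comap_measurable (cfDigits m))

theorem measurableSet_preimage_gaussMap_iterate {a m n : ℕ} (h : a + m ≤ n) {B : Set ℝ}
    (hB : MeasurableSet[cfAlgebra m] B) : MeasurableSet[cfAlgebra n] (gaussMap^[a] ⁻¹' B) := by
  obtain ⟨S, hS, rfl⟩ := hB
  have hdigits : Measurable[cfAlgebra n] fun x ↦ cfDigits m (gaussMap^[a] x) := by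
    refine @measurable_pi_lambda _ _ _ (cfAlgebra n) _ _ fun i ↦ ?_
    simp only [cfDigits, cfA_gaussMap_iterate]
    exact measurable_cfA_cfAlgebra (by omega)
  exact hdigits hS

theorem cfDigits_succ_gaussBranch (m : ℕ) (k : ℕ+) {y : ℝ} (hy : y ∈ Ico (0 : ℝ) 1) :
    cfDigits (m + 1) (gaussBranch k y) = Fin.cons (k : ℕ) (cfDigits m y) := by
  refine funext (Fin.cases ?_ fun i ↦ ?_)
  · exact cfA_gaussBranch_one k hy
  · rw [Fin.cons_succ, cfDigits, cfDigits, Fin.val_succ, add_comm (i : ℕ) 1,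
      ← cfA_gaussMap_iterate, Function.iterate_one, gaussMap_gaussBranch k hy, add_comm]

theorem mul_tailLaw_le_tailLaw_inter_preimage {r : ENNReal} {B : Set ℝ} (hB : MeasurableSet B)
    (hr : ∀ θ, r ≤ tailLaw θ B) {m : ℕ} {A : Set ℝ} (hA : MeasurableSet[cfAlgebra m] A)
    (θ : unitInterval) : r * tailLaw θ A ≤ tailLaw θ (A ∩ gaussMap^[m] ⁻¹' B) := by
  obtain ⟨S, -, rfl⟩ := hA
  induction m generalizing θ with
  | zero =>
    obtain rfl | hS := S.eq_empty_or_nonempty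
    · simp
    · simpa [Subsingleton.eq_univ_of_nonempty hS] using hr θ
  | succ m ih =>
    have hS : MeasurableSet (cfDigits (m + 1) ⁻¹' S) := measurable_cfDigits _ .of_discrete
    rw [tailLaw_apply_eq_tsum θ hS, tailLaw_apply_eq_tsum θ
      (hS.inter ((measurable_gaussMap.iterate _) hB)), ← ENNReal.tsum_mul_left]
    refine ENNReal.tsum_le_tsum fun k ↦ ?_
    rw [mul_left_comm]
    gcongr
    have hbranch := ih (tailParam k θ) (Fin.cons (α := fun _ ↦ ℕ) (k : ℕ) ⁻¹' S)
    convert! hbranch using 1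
    · congr 1
      refine tailLaw_congr_of_forall_mem_Ico _ fun y hy ↦ ?_
      simp only [mem_preimage, cfDigits_succ_gaussBranch m k hy]
    · refine tailLaw_congr_of_forall_mem_Ico _ fun y hy ↦ ?_
      simp only [mem_preimage, mem_inter_iff, cfDigits_succ_gaussBranch m k hy,
        Function.iterate_succ_apply, gaussMap_gaussBranch k hy]

theorem mul_tailLaw_real_le_tailLaw_real_inter_preimage {r : ℝ} {B : Set ℝ}
    (hB : MeasurableSet B) (hr : ∀ θ, r ≤ (tailLaw θ).real B) {m : ℕ} {A : Set ℝ}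
    (hA : MeasurableSet[cfAlgebra m] A) (θ : unitInterval) :
    r * (tailLaw θ).real A ≤ (tailLaw θ).real (A ∩ gaussMap^[m] ⁻¹' B) := by
  obtain hr0 | hr0 := le_total r 0
  · exact (mul_nonpos_of_nonpos_of_nonneg hr0 measureReal_nonneg).trans measureReal_nonneg
  · have h := mul_tailLaw_le_tailLaw_inter_preimage hB
      (fun θ ↦ (ENNReal.ofReal_le_iff_le_toReal (measure_ne_top _ _)).2 (hr θ)) hA θ
    have := ENNReal.toReal_mono (measure_ne_top _ _) h
    rwa [ENNReal.toReal_mul, ENNReal.toReal_ofReal hr0] at this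

theorem tailLaw_real_diff_preimage_le {r : ℝ} {B : Set ℝ}
    (hB : MeasurableSet B) (hr : ∀ θ, r ≤ (tailLaw θ).real B) {m : ℕ} {A : Set ℝ}
    (hA : MeasurableSet[cfAlgebra m] A) (θ : unitInterval) :
    (tailLaw θ).real (A \ gaussMap^[m] ⁻¹' B) ≤ (1 - r) * (tailLaw θ).real A := by
  have hsplit := measureReal_inter_add_sdiff (μ := tailLaw θ) (s := A)
    ((measurable_gaussMap.iterate m) hB)
  linarith [mul_tailLaw_real_le_tailLaw_real_inter_preimage hB hr hA θ]

section SeparatedBlocks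

variable {n ℓ : ℕ → ℕ} {B : ℕ → Set ℝ} {r : ℕ → ℝ}

theorem measurableSet_forall_lt_gaussMap_iterate_notMem (hn : ∀ i, n i + ℓ i ≤ n (i + 1))
    (hB : ∀ i, MeasurableSet[cfAlgebra (ℓ i)] (B i)) (J : ℕ) :
    MeasurableSet[cfAlgebra (n J)] {x | ∀ i < J, gaussMap^[n i] x ∉ B i} := by
  have hmono : Monotone n := monotone_nat_of_le_succ fun i ↦ le_of_add_le_left (hn i)
  simp only [ofPred_forall]
  exact .iInter fun i ↦ .iInter fun hi ↦
    (measurableSet_preimage_gaussMap_iterate ((hn i).trans (hmono hi)) (hB i)).compl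

theorem tailLaw_real_forall_lt_notMem_le_prod (hn : ∀ i, n i + ℓ i ≤ n (i + 1))
    (hB : ∀ i, MeasurableSet[cfAlgebra (ℓ i)] (B i)) (hr : ∀ i θ, r i ≤ (tailLaw θ).real (B i))
    (J : ℕ) (θ : unitInterval) :
    (tailLaw θ).real {x | ∀ i < J, gaussMap^[n i] x ∉ B i} ≤ ∏ i ∈ Finset.range J, (1 - r i) := by
  induction J with
  | zero => simp
  | succ J ih =>
    have hsucc : {x | ∀ i < J + 1, gaussMap^[n i] x ∉ B i} =
        {x | ∀ i < J, gaussMap^[n i] x ∉ B i} \ gaussMap^[n J] ⁻¹' B J := by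
      ext x
      simp only [mem_ofPred_eq, Set.mem_sdiff, mem_preimage, Nat.forall_lt_succ_right]
    have hr1 : 0 ≤ 1 - r J := sub_nonneg.2 ((hr J θ).trans measureReal_le_one)
    rw [hsucc, Finset.prod_range_succ, mul_comm]
    exact (tailLaw_real_diff_preimage_le (measurableSet_of_cfAlgebra (hB J)) (hr J)
      (measurableSet_forall_lt_gaussMap_iterate_notMem hn hB J) θ).trans (by gcongr)

theorem ae_frequently_gaussMap_iterate_mem (hn : ∀ i, n i + ℓ i ≤ n (i + 1))
    (hB : ∀ i, MeasurableSet[cfAlgebra (ℓ i)] (B i)) (hr0 : ∀ i, 0 ≤ r i)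
    (hr : ∀ i θ, r i ≤ (tailLaw θ).real (B i)) (hdiv : ¬ Summable r) (θ : unitInterval) :
    ∀ᵐ x ∂tailLaw θ, ∃ᶠ i in atTop, gaussMap^[n i] x ∈ B i := by
  simp only [frequently_atTop, ae_all_iff]
  intro m
  have hle : ∀ J, (tailLaw θ).real {x | ¬ ∃ i ≥ m, gaussMap^[n i] x ∈ B i} ≤
      ∏ i ∈ Finset.range J, (1 - r (i + m)) := fun J ↦ by
    have hsub : {x | ¬ ∃ i ≥ m, gaussMap^[n i] x ∈ B i} ⊆
        {x | ∀ i < J, gaussMap^[n (i + m)] x ∉ B (i + m)} :=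
      fun x hx i _ hi ↦ hx ⟨i + m, by omega, hi⟩
    refine (measureReal_mono hsub).trans
      (tailLaw_real_forall_lt_notMem_le_prod (n := fun i ↦ n (i + m)) (ℓ := fun i ↦ ℓ (i + m))
        (fun i ↦ ?_) (fun i ↦ hB (i + m)) (fun i ↦ hr (i + m)) J θ)
    simpa only [Nat.add_right_comm] using hn (i + m)
  have hzero := ge_of_tendsto' (tendsto_prod_one_sub_of_not_summable (fun i ↦ hr0 (i + m))
    (fun i ↦ (hr (i + m) θ).trans measureReal_le_one)
    (by rwa [summable_nat_add_iff])) hle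
  rw [ae_iff, ← measureReal_eq_zero_iff]
  exact hzero.antisymm measureReal_nonneg

end SeparatedBlocks

/-! ### Large prime partial quotients -/

theorem eventually_le_tailLaw_real_le_cfA'_one :
    ∀ᶠ t : ℝ in atTop, ∀ θ,
      1 / (192 * (t * Real.log t)) ≤ (tailLaw θ).real {x | t ≤ (cfA' x 1 : ℝ)} := by
  filter_upwards [eventually_le_card_primes_Ioc, eventually_gt_atTop 1] with t hcard ht θ
  have hlog : 0 < Real.log t := Real.log_pos ht
  set s := (Finset.Ioc ⌊t⌋₊ ⌊4 * t⌋₊).filter Nat.Prime with hs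
  have hdigit : ∀ p ∈ s, 1 / (48 * t ^ 2) ≤ (tailLaw θ).real ((cfA · 1) ⁻¹' {p}) := by
    intro p hp
    simp only [hs, Finset.mem_filter, Finset.mem_Ioc] at hp
    have hp0 : (0 : ℝ) < p := by exact_mod_cast hp.2.pos
    have hpt : (p : ℝ) ≤ 4 * t := (Nat.le_floor_iff (by linarith)).1 hp.1.2
    calc 1 / (48 * t ^ 2) = 1 / (3 * (4 * t) ^ 2) := by ring
      _ ≤ 1 / (3 * (p : ℝ) ^ 2) := by gcongr
      _ ≤ _ := le_tailLaw_real_cfA_one_eq θ ⟨p, hp.2.pos⟩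
  have hsub : (cfA · 1) ⁻¹' ↑s ⊆ {x | t ≤ (cfA' x 1 : ℝ)} := by
    intro x hx
    simp only [hs, Finset.coe_filter, Finset.mem_Ioc, mem_preimage, mem_ofPred_eq] at hx
    simpa only [mem_ofPred_eq, cfA', if_pos hx.2] using (Nat.lt_of_floor_lt hx.1.1).le
  calc 1 / (192 * (t * Real.log t)) = t / (4 * Real.log t) * (1 / (48 * t ^ 2)) := by
        field_simp
        norm_num
    _ ≤ s.card * (1 / (48 * t ^ 2)) := by gcongr
    _ ≤ ∑ p ∈ s, (tailLaw θ).real ((cfA · 1) ⁻¹' {p}) := by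
        simpa only [nsmul_eq_mul] using Finset.card_nsmul_le_sum s _ _ hdigit
    _ = (tailLaw θ).real ((cfA · 1) ⁻¹' ↑s) :=
        sum_measureReal_preimage_singleton s fun p _ ↦ measurable_cfA 1 (measurableSet_singleton p)
    _ ≤ (tailLaw θ).real {x | t ≤ (cfA' x 1 : ℝ)} := measureReal_mono hsub

/-- The points one of whose first `M` partial quotients is a prime `≥ t`, for `t > 0`; all of `ℝ` if
`t ≤ 0 < M`, because `cfA'` is `0` at composite partial quotients. -/
def primeBlock (t : ℝ) (M : ℕ) : Set ℝ := {x | ∃ i < M, t ≤ (cfA' x (i + 1) : ℝ)}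

theorem compl_primeBlock (t : ℝ) (M : ℕ) :
    (primeBlock t M)ᶜ = {x | ∀ i < M, gaussMap^[i] x ∉ {x | t ≤ (cfA' x 1 : ℝ)}} := by
  ext x
  have hshift : ∀ i, cfA' (gaussMap^[i] x) 1 = cfA' x (i + 1) := fun i ↦
    cfA'_gaussMap_iterate x i 0
  simp only [primeBlock, mem_compl_iff, mem_ofPred_eq, hshift, not_exists, not_and]

theorem measurableSet_le_cfA'_one (t : ℝ) :
    MeasurableSet[cfAlgebra 1] {x | t ≤ (cfA' x 1 : ℝ)} :=
  measurable_cfA_cfAlgebra zero_lt_one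
    (.of_discrete : MeasurableSet {a : ℕ | t ≤ ((if a.Prime then a else 0 : ℕ) : ℝ)})

theorem measurableSet_primeBlock (t : ℝ) (M : ℕ) :
    MeasurableSet[cfAlgebra M] (primeBlock t M) := by
  rw [← MeasurableSet.compl_iff, compl_primeBlock]
  exact measurableSet_forall_lt_gaussMap_iterate_notMem (n := fun i ↦ i) (fun _ ↦ le_rfl)
    (fun _ ↦ measurableSet_le_cfA'_one t) M

/-- The points with a prime partial quotient `≥ t` both among the first `M` partial quotients and
among the next `M` ones. -/
def twoBlock (t : ℝ) (M : ℕ) : Set ℝ := primeBlock t M ∩ gaussMap^[M] ⁻¹' primeBlock t M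

theorem measurableSet_twoBlock (t : ℝ) (M : ℕ) :
    MeasurableSet[cfAlgebra (M + M)] (twoBlock t M) :=
  (measurableSet_preimage_gaussMap_iterate (a := 0) (by omega) (measurableSet_primeBlock t M)).inter
    (measurableSet_preimage_gaussMap_iterate le_rfl (measurableSet_primeBlock t M))

section PrimeBlockProbability

variable {q t : ℝ}

theorem one_sub_one_sub_pow_le_tailLaw_real_primeBlock
    (hq : ∀ θ, q ≤ (tailLaw θ).real {x | t ≤ (cfA' x 1 : ℝ)}) (M : ℕ) (θ : unitInterval) :
    1 - (1 - q) ^ M ≤ (tailLaw θ).real (primeBlock t M) := by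
  have hcompl := tailLaw_real_forall_lt_notMem_le_prod (n := fun i ↦ i) (fun _ ↦ le_rfl)
    (fun _ ↦ measurableSet_le_cfA'_one t) (fun _ ↦ hq) M θ
  rw [← compl_primeBlock, Finset.prod_const, Finset.card_range,
    probReal_compl_eq_one_sub (measurableSet_of_cfAlgebra (measurableSet_primeBlock t M))] at hcompl
  linarith

theorem sq_one_sub_one_sub_pow_le_tailLaw_real_twoBlock (hq0 : 0 ≤ q)
    (hq : ∀ θ, q ≤ (tailLaw θ).real {x | t ≤ (cfA' x 1 : ℝ)}) (M : ℕ) (θ : unitInterval) :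
    (1 - (1 - q) ^ M) ^ 2 ≤ (tailLaw θ).real (twoBlock t M) := by
  have hblock := one_sub_one_sub_pow_le_tailLaw_real_primeBlock hq M
  have hq1 : q ≤ 1 := (hq θ).trans measureReal_le_one
  have hnonneg : 0 ≤ 1 - (1 - q) ^ M :=
    sub_nonneg.2 (pow_le_one₀ (by linarith) (by linarith))
  have hmeas := measurableSet_primeBlock t M
  rw [sq]
  exact (mul_le_mul_of_nonneg_left (hblock θ) hnonneg).trans
    (mul_tailLaw_real_le_tailLaw_real_inter_preimage (measurableSet_of_cfAlgebra hmeas) hblock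
      hmeas θ)

end PrimeBlockProbability

theorem exists_ne_le_cfA'_of_gaussMap_iterate_mem_twoBlock {t x : ℝ} {n M : ℕ}
    (hx : gaussMap^[n] x ∈ twoBlock t M) :
    ∃ k l : ℕ, 1 ≤ k ∧ k ≤ n + (M + M) ∧ 1 ≤ l ∧ l ≤ n + (M + M) ∧ k ≠ l ∧
      t ≤ (cfA' x k : ℝ) ∧ t ≤ (cfA' x l : ℝ) := by
  obtain ⟨⟨i, hi, hti⟩, j, hj, htj⟩ := hx
  rw [cfA'_gaussMap_iterate] at hti htj
  rw [cfA'_gaussMap_iterate] at htj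
  exact ⟨n + i + 1, n + (M + j) + 1, by omega, by omega, by omega, by omega, by omega, hti, htj⟩

theorem ae_frequently_dyadic_twoBlock {t q : ℕ → ℝ} (hq0 : ∀ j, 0 ≤ q j)
    (hq : ∀ j θ, q j ≤ (tailLaw θ).real {x | t j ≤ (cfA' x 1 : ℝ)})
    (hdiv : ¬ Summable fun j ↦ ((2 : ℝ) ^ j * q j) ^ 2) (θ : unitInterval) :
    ∀ᵐ x ∂tailLaw θ, ∃ᶠ j in atTop, gaussMap^[2 ^ (j + 1)] x ∈ twoBlock (t j) (2 ^ j) := by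
  have hq1 : ∀ j, q j ≤ 1 := fun j ↦ (hq j θ).trans measureReal_le_one
  refine ae_frequently_gaussMap_iterate_mem (fun j ↦ ?_)
    (fun j ↦ measurableSet_twoBlock (t j) (2 ^ j)) (fun j ↦ sq_nonneg _)
    (fun j θ ↦ sq_one_sub_one_sub_pow_le_tailLaw_real_twoBlock (hq0 j) (hq j) (2 ^ j) θ)
    (fun h ↦ hdiv ?_) θ
  · exact (by ring : 2 ^ (j + 1) + (2 ^ j + 2 ^ j) = 2 ^ (j + 1 + 1)).le
  · exact_mod_cast summable_sq_mul_of_summable_sq_one_sub_one_sub_pow hq0 hq1 h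

theorem mem_Eset_of_frequently_dyadic_twoBlock {φ : ℕ → ℝ} {x : ℝ} (hx : x ∈ Ico (0 : ℝ) 1)
    (h : ∃ᶠ j in atTop, gaussMap^[2 ^ (j + 1)] x ∈ twoBlock (φ (2 ^ (j + 2))) (2 ^ j)) :
    x ∈ Eset φ := by
  have hpow : Tendsto (fun j : ℕ ↦ 2 ^ (j + 2)) atTop atTop :=
    (tendsto_pow_atTop_atTop_of_one_lt one_lt_two).comp (tendsto_add_atTop_nat 2)
  refine ⟨hx, Nat.frequently_atTop_iff_infinite.1 (hpow.frequently (h.mono fun j hj ↦ ?_))⟩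
  have hend : 2 ^ (j + 2) = 2 ^ (j + 1) + (2 ^ j + 2 ^ j) := by ring
  have hpair := exists_ne_le_cfA'_of_gaussMap_iterate_mem_twoBlock hj
  rwa [← hend] at hpair

theorem Eset_antitone : Antitone Eset := by
  rintro φ ψ h x ⟨hx, hinf⟩
  refine ⟨hx, hinf.mono ?_⟩
  rintro n ⟨k, l, hk1, hkn, hl1, hln, hkl, hk, hl⟩
  exact ⟨k, l, hk1, hkn, hl1, hln, hkl, (h n).trans hk, (h n).trans hl⟩

theorem volume_Eset_le_one (φ : ℕ → ℝ) : volume (Eset φ) ≤ 1 :=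
  (measure_mono fun _ hx ↦ hx.1).trans (by simp : volume (Ico (0 : ℝ) 1) ≤ 1)

theorem volume_eq_one_of_ae_tailLaw_zero {E : Set ℝ} (hE : E ⊆ Ico 0 1)
    (h : ∀ᵐ x ∂tailLaw 0, x ∈ E) : volume E = 1 := by
  rw [← Measure.restrict_eq_self volume hE, ← tailLaw_zero]
  exact (measure_congr (eventuallyEq_univ.2 h)).trans measure_univ

theorem not_summable_sq_two_pow_mul_of_not_summable {φ : ℕ → ℝ} (hmono : Monotone φ)
    (h1 : ∀ n, 1 < φ n)
    (hdiv : ¬ Summable fun n : ℕ ↦ (n : ℝ) / (φ n ^ 2 * Real.log (φ n) ^ 2)) {C : ℝ} (hC : C ≠ 0) :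
    ¬ Summable fun j : ℕ ↦
      ((2 : ℝ) ^ j * (1 / (C * (φ (2 ^ (j + 2)) * Real.log (φ (2 ^ (j + 2))))))) ^ 2 := by
  have hlog : ∀ n, 0 < Real.log (φ n) := fun n ↦ Real.log_pos (h1 n)
  have hφ0 : ∀ n, 0 < φ n := fun n ↦ zero_lt_one.trans (h1 n)
  have hanti : Antitone fun n ↦ (φ n ^ 2 * Real.log (φ n) ^ 2)⁻¹ := fun m n hmn ↦ by
    have := hφ0 m
    have := hlog m
    have := hmono hmn
    dsimp only
    gcongr
  simp only [div_eq_mul_inv] at hdiv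
  rw [summable_natCast_mul_iff_summable_four_pow_mul (fun n ↦ by positivity) hanti,
    ← summable_nat_add_iff 2] at hdiv
  refine fun h ↦ hdiv ((h.mul_left (16 * C ^ 2)).congr fun j ↦ ?_)
  have := (hφ0 (2 ^ (j + 2))).ne'
  have := (hlog (2 ^ (j + 2))).ne'
  field_simp
  rw [pow_right_comm]
  ring

theorem exists_volume_Eset_eq_one_of_le :
    ∃ T : ℝ, 1 < T ∧ ∀ φ : ℕ → ℝ, Monotone φ → (∀ n, T ≤ φ n) →
      (¬ Summable fun n : ℕ ↦ (n : ℝ) / (φ n ^ 2 * Real.log (φ n) ^ 2)) →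
      volume (Eset φ) = 1 := by
  obtain ⟨T, hT⟩ := eventually_atTop.1
    (eventually_le_tailLaw_real_le_cfA'_one.and (eventually_gt_atTop 1))
  refine ⟨T, (hT T le_rfl).2, fun φ hmono hTφ hdiv ↦ ?_⟩
  have h1 : ∀ n, 1 < φ n := fun n ↦ (hT _ (hTφ n)).2
  have hblocks := ae_frequently_dyadic_twoBlock (fun j ↦ ?_)
    (fun j ↦ (hT _ (hTφ (2 ^ (j + 2)))).1)
    (not_summable_sq_two_pow_mul_of_not_summable hmono h1 hdiv (by norm_num)) 0
  · refine volume_eq_one_of_ae_tailLaw_zero (fun _ hx ↦ hx.1) ?_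
    filter_upwards [hblocks, ae_tailLaw_mem_Ico 0] with x hfreq hx
    exact mem_Eset_of_frequently_dyadic_twoBlock hx hfreq
  · have := zero_lt_one.trans (h1 (2 ^ (j + 2)))
    have := Real.log_pos (h1 (2 ^ (j + 2)))
    positivity

theorem not_summable_max_of_not_summable {φ : ℕ → ℝ} (hmono : Monotone φ)
    (hdiv : ¬ Summable fun n : ℕ ↦ (n : ℝ) / (φ n ^ 2 * Real.log (φ n) ^ 2)) {T : ℝ}
    (hT : 1 < T) :
    ¬ Summable fun n : ℕ ↦ (n : ℝ) / (max (φ n) T ^ 2 * Real.log (max (φ n) T) ^ 2) := by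
  obtain htend | ⟨l, hl⟩ := tendsto_atTop_of_monotone hmono
  · rwa [summable_congr_atTop (f₁ := fun n : ℕ ↦ (n : ℝ) / (φ n ^ 2 * Real.log (φ n) ^ 2))] at hdiv
    filter_upwards [htend.eventually_ge_atTop T] with n hn
    rw [max_eq_left hn]
  · set c := max l T
    have hlog : ∀ {s}, T ≤ s → 0 < Real.log s := fun h ↦ Real.log_pos (hT.trans_le h)
    have hlower : ∀ n : ℕ, (n : ℝ) / (c ^ 2 * Real.log c ^ 2) ≤
        (n : ℝ) / (max (φ n) T ^ 2 * Real.log (max (φ n) T) ^ 2) := fun n ↦ by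
      have := hlog (le_max_right (φ n) T)
      have : 0 < max (φ n) T := by linarith [le_max_right (φ n) T]
      have : max (φ n) T ≤ c := max_le_max_right T (hmono.ge_of_tendsto hl n)
      gcongr
    have hc0 : 0 < c ^ 2 * Real.log c ^ 2 := by
      have := hlog (le_max_right l T)
      have : 0 < c := by linarith [le_max_right l T]
      positivity
    intro h
    exact not_tendsto_nhds_of_tendsto_atTop (tendsto_natCast_atTop_atTop.atTop_div_const hc0) 0
      (h.of_nonneg_of_le (fun n ↦ by positivity) hlower).tendsto_atTop_zero

theorem Eset_measure_one_general (φ : ℕ → ℝ) (hmono : Monotone φ)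
    (hdiv : ¬ Summable fun n : ℕ ↦ (n : ℝ) / (φ n ^ 2 * Real.log (φ n) ^ 2)) :
    volume (Eset φ) = 1 := by
  obtain ⟨T, hT, hfull⟩ := exists_volume_Eset_eq_one_of_le
  have hmax : volume (Eset fun n ↦ max (φ n) T) = 1 :=
    hfull _ (fun m n hmn ↦ max_le_max_right T (hmono hmn)) (fun n ↦ le_max_right _ _)
      (not_summable_max_of_not_summable hmono hdiv hT)
  refine (volume_Eset_le_one φ).antisymm (hmax.ge.trans (measure_mono (Eset_antitone ?_)))
  exact fun n ↦ le_max_left _ _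

/-- divergence part of the zero–one law: if φ is non-decreasing with
`φ(n) → ∞` and `Σ n/(φ(n)² log²φ(n)) = ∞`, then `E'(φ)` has full Lebesgue measure 1. -/
theorem Eset_measure_one (φ : ℕ → ℝ) (hpos : ∀ n, 0 < φ n) (hmono : Monotone φ)
    (htend : Tendsto φ atTop atTop)
    (hdiv : ¬ Summable fun n : ℕ => (n : ℝ) / (φ n ^ 2 * Real.log (φ n) ^ 2)) :
    volume (Eset φ) = 1 :=
  Eset_measure_one_general φ hmono hdiv
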